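/- Let n ≥ 2 and let E and E_i (i ∈ ℕ) be nonempty compact subsets of ℝⁿ satisfying E_{i+1} ⊆ E_i for every i and E = ∩_{i=1}^∞ E_i. Then SE = ∩_{i=1}^∞ SE_i, where S denotes Steiner symmetrization about the hyperplane e_n^⊥. -/

import Mathlib

open MeasureTheory Filter Metric

/-- Orthogonal projection of `ℝⁿ` onto the hyperplane `u^⊥` through the origin. -/
noncomputable def steinerProj {n : ℕ} (u : EuclideanSpace ℝ (Fin n)) :
    EuclideanSpace ℝ (Fin n) → EuclideanSpace ℝ (Fin n) :=
  fun z => ((Submodule.orthogonalProjectionOnto (Submodule.span ℝ {u})ᗮ) z : EuclideanSpace ℝ (Fin n))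

/-- `ℓ_{E,u}(x')` : the one-dimensional Lebesgue measure of `{t : x' + t u ∈ E}`. -/
noncomputable def steinerLen {n : ℕ} (u : EuclideanSpace ℝ (Fin n))
    (E : Set (EuclideanSpace ℝ (Fin n))) (x' : EuclideanSpace ℝ (Fin n)) : ℝ :=
  (volume {t : ℝ | x' + t • u ∈ E}).toReal

/-- Steiner symmetrization of `E` about the hyperplane `u^⊥`:
`S_u E = {x' + t u : x' ∈ π_u(E), |t| ≤ ℓ_{E,u}(x')/2}`. -/
noncomputable def steiner {n : ℕ} (u : EuclideanSpace ℝ (Fin n))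
    (E : Set (EuclideanSpace ℝ (Fin n))) : Set (EuclideanSpace ℝ (Fin n)) :=
  {x | ∃ x' ∈ steinerProj u '' E, ∃ t : ℝ, |t| ≤ steinerLen u E x' / 2 ∧ x = x' + t • u}

/-- The last standard basis vector `e_n` of `ℝⁿ` (junk value `0` if `n = 0`). -/
noncomputable def lastDir (n : ℕ) : EuclideanSpace ℝ (Fin n) :=
  if h : n = 0 then 0
  else EuclideanSpace.single ⟨n - 1, Nat.sub_lt (Nat.pos_of_ne_zero h) one_pos⟩ 1

/-- `max_{x ∈ E} |x|` for a (nonempty compact) set `E ⊆ ℝⁿ`. -/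
noncomputable def maxNorm {n : ℕ} (E : Set (EuclideanSpace ℝ (Fin n))) : ℝ :=
  sSup ((fun x => ‖x‖) '' E)

/-!
A neighbourhood of the intersection of a directed family of compact sets already contains a member
of the family. Applied to the complement of a fibre of `π_u`, this shows that `π_u` commutes with
the intersection; applied to an open set of almost minimal measure around a compact slice, it shows
that the length of the slice passes to the infimum. Since `x' + t u` lies in `S_u E` exactly when
`x' ∈ π_u(E)` and `|t| ≤ ℓ_{E,u}(x') / 2`, both conditions pass to the intersection.
-/

section DirectedCompact

variable {ι X : Type*} [Nonempty ι] [TopologicalSpace X] [T2Space X] {K : ι → Set X}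

theorem exists_subset_of_iInter_subset_isOpen (hdir : Directed (· ⊇ ·) K)
    (hK : ∀ i, IsCompact (K i)) {U : Set X} (hU : IsOpen U) (hKU : ⋂ i, K i ⊆ U) :
    ∃ i, K i ⊆ U :=
  exists_subset_nhds_of_isCompact hdir hK fun _ hx => hU.mem_nhds (hKU hx)

theorem image_iInter_of_directed_isCompact {Y : Type*} [TopologicalSpace Y] [T1Space Y]
    {f : X → Y} (hf : Continuous f) (hdir : Directed (· ⊇ ·) K) (hK : ∀ i, IsCompact (K i)) :
    f '' ⋂ i, K i = ⋂ i, f '' K i := by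
  refine (Set.image_iInter_subset K f).antisymm fun y hy => ?_
  by_contra hy'
  obtain ⟨i, hi⟩ := exists_subset_of_iInter_subset_isOpen hdir hK
    (isOpen_compl_singleton.preimage hf) fun x hx (hxy : f x = y) => hy' ⟨x, hx, hxy⟩
  obtain ⟨x, hx, hxy⟩ := Set.mem_iInter.mp hy i
  exact hi hx hxy

theorem measure_iInter_of_directed_isCompact [MeasurableSpace X] {μ : Measure X}
    [μ.OuterRegular] (hdir : Directed (· ⊇ ·) K) (hK : ∀ i, IsCompact (K i)) :
    μ (⋂ i, K i) = ⨅ i, μ (K i) := by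
  refine le_antisymm (le_iInf fun i => measure_mono (Set.iInter_subset K i)) ?_
  refine le_of_forall_gt fun r hr => ?_
  obtain ⟨U, hKU, hU, hUr⟩ := (⋂ i, K i).exists_isOpen_lt_of_lt r hr
  obtain ⟨i, hi⟩ := exists_subset_of_iInter_subset_isOpen hdir hK hU hKU
  exact (iInf_le _ i).trans_lt ((measure_mono hi).trans_lt hUr)

end DirectedCompact

theorem isCompact_setOf_add_smul_mem {𝕜 V : Type*} [NontriviallyNormedField 𝕜] [CompleteSpace 𝕜]
    [AddCommGroup V] [TopologicalSpace V] [IsTopologicalAddGroup V] [Module 𝕜 V]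
    [ContinuousSMul 𝕜 V] [T2Space V] {u : V} (hu : u ≠ 0) {E : Set V} (hE : IsCompact E) (y : V) :
    IsCompact {t : 𝕜 | y + t • u ∈ E} :=
  ((Homeomorph.addLeft y).isClosedEmbedding.comp
    (isClosedEmbedding_smul_left hu)).isCompact_preimage hE

section Steiner

variable {n : ℕ} {u : EuclideanSpace ℝ (Fin n)}

theorem continuous_steinerProj (u : EuclideanSpace ℝ (Fin n)) : Continuous (steinerProj u) := by
  unfold steinerProj
  fun_prop

theorem steinerProj_mem_orthogonal (u x : EuclideanSpace ℝ (Fin n)) :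
    steinerProj u x ∈ (Submodule.span ℝ {u})ᗮ :=
  SetLike.coe_mem _

theorem exists_steinerProj_add_smul_eq (u x : EuclideanSpace ℝ (Fin n)) :
    ∃ t : ℝ, steinerProj u x + t • u = x := by
  have hsub : x - steinerProj u x ∈ (Submodule.span ℝ {u})ᗮᗮ :=
    Submodule.sub_starProjection_mem_orthogonal x
  rw [Submodule.orthogonal_orthogonal] at hsub
  obtain ⟨t, ht⟩ := Submodule.mem_span_singleton.mp hsub
  exact ⟨t, by rw [ht, add_sub_cancel]⟩

theorem steinerProj_add_smul {y : EuclideanSpace ℝ (Fin n)}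
    (hy : y ∈ (Submodule.span ℝ {u})ᗮ) (t : ℝ) : steinerProj u (y + t • u) = y := by
  lift y to (Submodule.span ℝ {u})ᗮ using hy
  simp only [steinerProj, map_add, map_smul,
    Submodule.orthogonalProjectionOnto_mem_subspace_eq_self,
    Submodule.orthogonalProjectionOnto_orthogonalComplement_singleton_eq_zero, smul_zero, add_zero]

theorem add_smul_mem_steiner_iff (hu : u ≠ 0) {E : Set (EuclideanSpace ℝ (Fin n))}
    {y : EuclideanSpace ℝ (Fin n)} (hy : y ∈ (Submodule.span ℝ {u})ᗮ) {t : ℝ} :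
    y + t • u ∈ steiner u E ↔ y ∈ steinerProj u '' E ∧ |t| ≤ steinerLen u E y / 2 := by
  refine ⟨?_, fun ⟨hyE, ht⟩ => ⟨y, hyE, t, ht, rfl⟩⟩
  rintro ⟨_, ⟨z, hz, rfl⟩, s, hs, heq⟩
  obtain rfl : y = steinerProj u z := by
    simpa only [steinerProj_add_smul hy, steinerProj_add_smul (steinerProj_mem_orthogonal u z)]
      using congrArg (steinerProj u) heq
  obtain rfl : t = s := smul_left_injective ℝ hu (add_left_cancel heq)
  exact ⟨⟨z, hz, rfl⟩, hs⟩

variable {ι : Type*} [Nonempty ι] {K : ι → Set (EuclideanSpace ℝ (Fin n))}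

theorem steinerLen_iInter (hu : u ≠ 0) (hdir : Directed (· ⊇ ·) K) (hK : ∀ i, IsCompact (K i))
    (y : EuclideanSpace ℝ (Fin n)) : steinerLen u (⋂ i, K i) y = ⨅ i, steinerLen u (K i) y := by
  have hslice : ∀ i, IsCompact {t : ℝ | y + t • u ∈ K i} := fun i =>
    isCompact_setOf_add_smul_mem hu (hK i) y
  have hslice_dir : Directed (· ⊇ ·) fun i => {t : ℝ | y + t • u ∈ K i} :=
    hdir.mono_comp (g := fun E => {t : ℝ | y + t • u ∈ E}) _ fun _ _ h => Set.preimage_mono h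
  simp only [steinerLen, Set.mem_iInter, Set.ofPred_forall]
  rw [measure_iInter_of_directed_isCompact hslice_dir hslice,
    ENNReal.toReal_iInf fun i => (hslice i).measure_ne_top]

theorem le_steinerLen_iInter_iff (hu : u ≠ 0) (hdir : Directed (· ⊇ ·) K)
    (hK : ∀ i, IsCompact (K i)) {y : EuclideanSpace ℝ (Fin n)} {r : ℝ} :
    r ≤ steinerLen u (⋂ i, K i) y ↔ ∀ i, r ≤ steinerLen u (K i) y := by
  have hbdd : BddBelow (Set.range fun i => steinerLen u (K i) y) :=
    ⟨0, Set.forall_mem_range.mpr fun _ => ENNReal.toReal_nonneg⟩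
  rw [steinerLen_iInter hu hdir hK, le_ciInf_iff hbdd]

theorem stmt4_general (hu : u ≠ 0) (hdir : Directed (· ⊇ ·) K) (hK : ∀ i, IsCompact (K i)) :
    steiner u (⋂ i, K i) = ⋂ i, steiner u (K i) := by
  ext x
  obtain ⟨t, ht⟩ := exists_steinerProj_add_smul_eq u x
  rw [← ht]
  simp only [Set.mem_iInter, add_smul_mem_steiner_iff hu (steinerProj_mem_orthogonal u x),
    image_iInter_of_directed_isCompact (continuous_steinerProj u) hdir hK,
    le_div_iff₀ (two_pos (α := ℝ)), le_steinerLen_iInter_iff hu hdir hK, forall_and]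

end Steiner

theorem lastDir_ne_zero {n : ℕ} (hn : n ≠ 0) : lastDir n ≠ 0 := by
  simp [lastDir, hn]

/-- For a decreasing sequence of nonempty compact sets `E_i` with intersection `E`,
Steiner symmetrization about `e_n^⊥` satisfies `SE = ⋂ᵢ SE_i`. -/
theorem stmt4 (n : ℕ) (hn : 2 ≤ n) (E : Set (EuclideanSpace ℝ (Fin n)))
    (Eseq : ℕ → Set (EuclideanSpace ℝ (Fin n)))
    (hE : IsCompact E) (hEne : E.Nonempty)
    (hEi : ∀ i, IsCompact (Eseq i)) (hEine : ∀ i, (Eseq i).Nonempty)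
    (hdec : ∀ i, Eseq (i + 1) ⊆ Eseq i)
    (hint : E = ⋂ i, Eseq i) :
    steiner (lastDir n) E = ⋂ i, steiner (lastDir n) (Eseq i) := by
  subst hint
  exact stmt4_general (lastDir_ne_zero (by omega)) (antitone_nat_of_succ_le hdec).directed_ge hEi
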